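/- Let n ≥ 1 and suppose (A,b) satisfies Setting B with constant δ ∈ (n/(n+π²),1]. Define γ := tr A/(|A|² + |b|²), Ã := γA, b̃ := γb, and κ := (δ − n/(n+π²))·(n+π²)/π². Then for every twice continuously differentiable ℤⁿ-periodic function φ : ℝⁿ → ℝ there holds ∫_Y |Ã:D²φ + b̃·∇φ − Δφ|² ≤ (1−κ) ∫_Y (Δφ)², where D²φ is the Hessian, ∇φ the gradient and Δφ the Laplacian of φ. -/

import Mathlib

open MeasureTheory

noncomputable section

/-- The unit cell `Y = (0,1)^n`. -/
def unitCell (n : ℕ) : Set (Fin n → ℝ) := Set.univ.pi fun _ => Set.Ioo (0 : ℝ) 1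

/-- Frobenius norm squared of a matrix. -/
def frobSq {n : ℕ} (M : Matrix (Fin n) (Fin n) ℝ) : ℝ := ∑ i, ∑ j, (M i j) ^ 2

/-- Frobenius inner product of two matrices. -/
def frobInner {n : ℕ} (M N : Matrix (Fin n) (Fin n) ℝ) : ℝ := ∑ i, ∑ j, M i j * N i j

/-- Euclidean norm squared of a vector. -/
def euclSq {n : ℕ} (v : Fin n → ℝ) : ℝ := ∑ i, (v i) ^ 2

/-- Euclidean dot product. -/
def dotc {n : ℕ} (v w : Fin n → ℝ) : ℝ := ∑ i, v i * w i

/-- `ℤⁿ`-periodicity of a function on `ℝⁿ`. -/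
def IsPeriodic {n : ℕ} {α : Type*} (f : (Fin n → ℝ) → α) : Prop :=
  ∀ (x : Fin n → ℝ) (k : Fin n → ℤ), f (x + fun i => (k i : ℝ)) = f x

/-- Partial derivative in direction `i`. -/
def pd {n : ℕ} (f : (Fin n → ℝ) → ℝ) (i : Fin n) (x : Fin n → ℝ) : ℝ :=
  fderiv ℝ f x (Pi.single i 1)

/-- Gradient. -/
def grad {n : ℕ} (f : (Fin n → ℝ) → ℝ) (x : Fin n → ℝ) : Fin n → ℝ := fun i => pd f i x

/-- Hessian matrix. -/
def hess {n : ℕ} (f : (Fin n → ℝ) → ℝ) (x : Fin n → ℝ) : Matrix (Fin n) (Fin n) ℝ :=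
  Matrix.of fun i j => pd (pd f j) i x

/-- Laplacian. -/
def lap {n : ℕ} (f : (Fin n → ℝ) → ℝ) (x : Fin n → ℝ) : ℝ := ∑ i, pd (pd f i) i x

/-- Jacobian matrix of a vector field: `(jac w x) i j = ∂_j w_i (x)`. -/
def jac {n : ℕ} (w : (Fin n → ℝ) → Fin n → ℝ) (x : Fin n → ℝ) : Matrix (Fin n) (Fin n) ℝ :=
  Matrix.of fun i j => pd (fun y => w y i) j x

/-- Divergence of a vector field. -/
def divg {n : ℕ} (w : (Fin n → ℝ) → Fin n → ℝ) (x : Fin n → ℝ) : ℝ :=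
  ∑ i, pd (fun y => w y i) i x

/-- Setting B: symmetric-valued, measurable, `ℤⁿ`-periodic, essentially bounded coefficients,
uniform ellipticity, and the Cordes-type condition with constant `δ ∈ (n/(n+π²), 1]`. -/
structure SettingB {n : ℕ} (A : (Fin n → ℝ) → Matrix (Fin n) (Fin n) ℝ)
    (b : (Fin n → ℝ) → Fin n → ℝ) (lam Lam δ : ℝ) : Prop where
  symm : ∀ x, (A x).IsSymm
  measA : ∀ i j, Measurable fun x => A x i j
  measb : ∀ i, Measurable fun x => b x i
  perA : IsPeriodic A
  perb : IsPeriodic b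
  bddA : ∃ C : ℝ, ∀ᵐ x ∂(volume : Measure (Fin n → ℝ)), frobSq (A x) ≤ C
  bddb : ∃ C : ℝ, ∀ᵐ x ∂(volume : Measure (Fin n → ℝ)), euclSq (b x) ≤ C
  lam_pos : 0 < lam
  lam_le_Lam : lam ≤ Lam
  ellip : ∀ᵐ x ∂(volume : Measure (Fin n → ℝ)), ∀ ξ : Fin n → ℝ,
    lam * euclSq ξ ≤ dotc ξ (Matrix.mulVec (A x) ξ) ∧
      dotc ξ (Matrix.mulVec (A x) ξ) ≤ Lam * euclSq ξ
  delta_mem : δ ∈ Set.Ioc ((n : ℝ) / ((n : ℝ) + Real.pi ^ 2)) 1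
  cordes : ∀ᵐ x ∂(volume : Measure (Fin n → ℝ)),
    (frobSq (A x) + euclSq (b x)) / (Matrix.trace (A x)) ^ 2 ≤ 1 / ((n : ℝ) - 1 + δ)

/-- The renormalization function `γ = tr A / (|A|² + |b|²)`. -/
def gam {n : ℕ} (A : (Fin n → ℝ) → Matrix (Fin n) (Fin n) ℝ)
    (b : (Fin n → ℝ) → Fin n → ℝ) (x : Fin n → ℝ) : ℝ :=
  Matrix.trace (A x) / (frobSq (A x) + euclSq (b x))

/-- The constant `κ = (δ − n/(n+π²))·(n+π²)/π²`. -/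
def kappa (n : ℕ) (δ : ℝ) : ℝ :=
  (δ - (n : ℝ) / ((n : ℝ) + Real.pi ^ 2)) * (((n : ℝ) + Real.pi ^ 2) / Real.pi ^ 2)

/-- The invariant measure: measurable, `ℤⁿ`-periodic, square-integrable over `Y`,
with unit mass over `Y`, solving the stationary FPK equation in the very weak sense. -/
def IsInvariantMeasure {n : ℕ} (A : (Fin n → ℝ) → Matrix (Fin n) (Fin n) ℝ)
    (b : (Fin n → ℝ) → Fin n → ℝ) (r : (Fin n → ℝ) → ℝ) : Prop :=
  Measurable r ∧ IsPeriodic r ∧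
    IntegrableOn (fun x => (r x) ^ 2) (unitCell n) ∧
    (∫ x in unitCell n, r x) = 1 ∧
    ∀ φ : (Fin n → ℝ) → ℝ, ContDiff ℝ 2 φ → IsPeriodic φ →
      (∫ x in unitCell n,
        r x * (frobInner (A x) (hess φ x) + dotc (b x) (grad φ x))) = 0

/-- The bilinear form `B₂`. -/
def B2 {n : ℕ} (A : (Fin n → ℝ) → Matrix (Fin n) (Fin n) ℝ)
    (b : (Fin n → ℝ) → Fin n → ℝ) (v w : (Fin n → ℝ) → Fin n → ℝ) : ℝ :=
  (∫ x in unitCell n,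
    divg v x * (frobInner (gam A b x • A x) (jac w x) + dotc (gam A b x • b x) (w x)))
  + (1 / 2) * ∫ x in unitCell n,
      frobInner (jac v x - (jac v x).transpose) (jac w x - (jac w x).transpose)

/-!
By Cauchy–Schwarz the integrand is at most `(|Ã - I|² + |b̃|²) (|D²φ|² + |∇φ|²)`, and the choice of
`γ` turns the Cordes condition into `|Ã - I|² + |b̃|² ≤ 1 - δ`. Periodicity gives
`∫ |D²φ|² = ∫ (Δφ)²`. Along every line in direction `eᵢ` the derivative `∂ᵢφ` has zero mean over a
period, so a one-dimensional Poincaré inequality yields `∫ |∇φ|² ≤ (1/12) ∫ |D²φ|²`. The constant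
`1/12` is not the optimal `1/(4π²)`, but `1 - κ = (1 - δ) (1 + n/π²)` and `1/12 ≤ n/π²`.
-/

theorem hasDerivAt_comp_add_smul {E G : Type*} [NormedAddCommGroup E] [NormedSpace ℝ E]
    [NormedAddCommGroup G] [NormedSpace ℝ G] {F : E → G} (hF : Differentiable ℝ F) (x c : E)
    (t : ℝ) :
    HasDerivAt (fun t : ℝ => F (x + t • c)) (fderiv ℝ F (x + t • c) c) t := by
  have hline : HasDerivAt (fun t : ℝ => x + t • c) c t := by
    simpa using ((hasDerivAt_id t).smul_const c).const_add x
  exact (hF _).hasFDerivAt.comp_hasDerivAt t hline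

theorem hasDerivAt_setIntegral_comp_add_smul_mul {E : Type*} [NormedAddCommGroup E]
    [NormedSpace ℝ E] [MeasurableSpace E] [OpensMeasurableSpace E] {μ : Measure E}
    [IsFiniteMeasureOnCompacts μ] {K : Set E} (hK : IsCompact K) {F g : E → ℝ}
    (hF : ContDiff ℝ 1 F) (hg : Continuous g) (c : E) :
    HasDerivAt (fun t : ℝ => ∫ x in K, F (x + t • c) * g x ∂μ)
      (∫ x in K, fderiv ℝ F x c * g x ∂μ) 0 := by
  have hFc := hF.continuous
  have := hF.continuous_fderiv one_ne_zero
  obtain ⟨C, hC⟩ := (hK.prod (isCompact_closedBall (0 : ℝ) 1)).exists_bound_of_continuousOn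
    (f := fun p : E × ℝ => fderiv ℝ F (p.1 + p.2 • c) c * g p.1) (by fun_prop)
  have hderiv := (hasDerivAt_integral_of_dominated_loc_of_deriv_le (μ := μ.restrict K)
    (F := fun t x => F (x + t • c) * g x) (F' := fun t x => fderiv ℝ F (x + t • c) c * g x)
    (x₀ := (0 : ℝ)) (bound := fun _ => C) (Metric.closedBall_mem_nhds 0 one_pos)
    (.of_forall fun t => Continuous.aestronglyMeasurable (by fun_prop))
    (ContinuousOn.integrableOn_compact hK (by fun_prop))
    (Continuous.aestronglyMeasurable (by fun_prop))
    (ae_restrict_of_forall_mem hK.measurableSet fun x hx t ht => hC (x, t) ⟨hx, ht⟩)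
    (continuousOn_const.integrableOn_compact hK)
    (.of_forall fun x t _ =>
      (hasDerivAt_comp_add_smul (hF.differentiable one_ne_zero) x c t).mul_const (g x))).2
  simpa only [zero_smul, add_zero] using hderiv

-- `f'` is tested against `s - m`, with `m` the midpoint: `12` is the inverse of `∫ (s - 1/2)²` over
-- `[0, 1]`.
theorem twelve_mul_sq_le_integral_deriv_sq {f f' : ℝ → ℝ} {a b : ℝ} (hab : a < b)
    (hf : ∀ s ∈ Set.uIcc a b, HasDerivAt f (f' s) s) (hf' : ContinuousOn f' (Set.uIcc a b))
    (hends : f b = f a) (hmean : ∫ s in a..b, f s = 0) :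
    12 * f a ^ 2 ≤ (b - a) * ∫ s in a..b, f' s ^ 2 := by
  set m := (a + b) / 2
  set L := b - a
  have hLpos : 0 < L := sub_pos.2 hab
  have hrep : ∫ s in a..b, (s - m) * f' s = L * f a := by
    rw [intervalIntegral.integral_mul_deriv_eq_deriv_mul (u := fun s => s - m)
      (u' := fun _ => 1) (fun s _ => (hasDerivAt_id s).sub_const _) hf
      (continuous_const.intervalIntegrable _ _) hf'.intervalIntegrable]
    simp only [one_mul, hmean, hends]
    ring
  have hsq : ∫ s in a..b, (s - m) ^ 2 = L ^ 3 / 12 := by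
    rw [intervalIntegral.integral_comp_sub_right (fun s => s ^ 2), integral_pow]
    norm_num
    ring
  have hexp : ∫ s in a..b, (L ^ 2 * f' s - 12 * f a * (s - m)) ^ 2
      = L ^ 4 * (∫ s in a..b, f' s ^ 2) - 24 * L ^ 2 * f a * (∫ s in a..b, (s - m) * f' s)
        + 144 * f a ^ 2 * ∫ s in a..b, (s - m) ^ 2 := by
    simp only [← intervalIntegral.integral_const_mul]
    rw [← intervalIntegral.integral_sub, ← intervalIntegral.integral_add]
    · congr 1
      ext s
      ring
    all_goals exact ContinuousOn.intervalIntegrable (by fun_prop)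
  have hnonneg : 0 ≤ L ^ 3 * (L * (∫ s in a..b, f' s ^ 2) - 12 * f a ^ 2) := by
    calc 0 ≤ ∫ s in a..b, (L ^ 2 * f' s - 12 * f a * (s - m)) ^ 2 :=
        intervalIntegral.integral_nonneg hab.le fun s _ => sq_nonneg _
      _ = _ := by rw [hexp, hrep, hsq]; ring
  exact sub_nonneg.1 (nonneg_of_mul_nonneg_right hnonneg (pow_pos hLpos 3))

theorem volume_restrict_unitCell (n : ℕ) :
    (volume : Measure (Fin n → ℝ)).restrict (unitCell n) = volume.restrict (Set.Icc 0 1) :=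
  Measure.restrict_congr_set Measure.univ_pi_Ioo_ae_eq_Icc

theorem integrableOn_unitCell {n : ℕ} {E : Type*} [NormedAddCommGroup E] {F : (Fin n → ℝ) → E}
    (hF : Continuous F) : IntegrableOn F (unitCell n) := by
  rw [IntegrableOn, volume_restrict_unitCell]
  exact hF.continuousOn.integrableOn_compact isCompact_Icc

theorem setIntegral_unitCell_comp_add {n : ℕ} {E : Type*} [NormedAddCommGroup E] [NormedSpace ℝ E]
    (F : (Fin n → ℝ) → E) (v : Fin n → ℝ) :
    ∫ x in unitCell n, F (x + v) = ∫ x in {x | ∀ i, x i ∈ Set.Ioc (v i) (v i + 1)}, F x := by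
  have hpreimage : (· + v) ⁻¹' {x | ∀ i, x i ∈ Set.Ioc (v i) (v i + 1)}
      = Set.univ.pi fun _ => Set.Ioc 0 1 := by
    ext x
    simp [add_comm]
  have hcell : unitCell n =ᵐ[volume] Set.univ.pi fun _ => Set.Ioc 0 1 :=
    Measure.univ_pi_Ioo_ae_eq_Icc.trans Measure.univ_pi_Ioc_ae_eq_Icc.symm
  rw [setIntegral_congr_set hcell, ← hpreimage]
  exact (measurePreserving_add_right volume v).setIntegral_preimage_emb
    (measurableEmbedding_addRight v) F _

namespace IsPeriodic

variable {n : ℕ}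

theorem comp {α β : Type*} {F : (Fin n → ℝ) → α} (hF : IsPeriodic F) (g : α → β) :
    IsPeriodic fun x => g (F x) :=
  fun x k => congrArg g (hF x k)

theorem mul {u v : (Fin n → ℝ) → ℝ} (hu : IsPeriodic u) (hv : IsPeriodic v) :
    IsPeriodic fun x => u x * v x :=
  fun x k => congrArg₂ (· * ·) (hu x k) (hv x k)

theorem comp_add {α : Type*} {F : (Fin n → ℝ) → α} (hF : IsPeriodic F) (v : Fin n → ℝ) :
    IsPeriodic fun x => F (x + v) :=
  fun x k => (congrArg F (add_right_comm _ _ _)).trans (hF (x + v) k)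

theorem fderiv {E : Type*} [NormedAddCommGroup E] [NormedSpace ℝ E] {F : (Fin n → ℝ) → E}
    (hF : IsPeriodic F) : IsPeriodic (fderiv ℝ F) := fun x k => by
  rw [← fderiv_comp_add_right]
  exact congrArg (_root_.fderiv ℝ · x) (funext fun y => hF y k)

theorem pd {F : (Fin n → ℝ) → ℝ} (hF : IsPeriodic F) (i : Fin n) : IsPeriodic (pd F i) :=
  hF.fderiv.comp fun L => L (Pi.single i 1)

theorem add_single {α : Type*} {F : (Fin n → ℝ) → α} (hF : IsPeriodic F) (x : Fin n → ℝ)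
    (i : Fin n) : F (x + Pi.single i 1) = F x := by
  have hcast : (fun j => ((Pi.single i 1 : Fin n → ℤ) j : ℝ)) = Pi.single i 1 := by
    ext j
    simp only [Pi.single_apply, Int.cast_ite, Int.cast_one, Int.cast_zero]
  rw [← hF x (Pi.single i 1), hcast]

theorem factorsThrough_unitAddTorus {α : Type*} {F : (Fin n → ℝ) → α} (hF : IsPeriodic F) :
    F.FactorsThrough fun x i => (x i : UnitAddCircle) := by
  intro x y hxy
  have hint : ∀ i, ∃ k : ℤ, x i = y i + k := fun i => by
    obtain ⟨k, hk⟩ := AddCircle.coe_eq_zero_iff (1 : ℝ) |>.1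
      (sub_eq_zero.2 (congrFun hxy i) : ((x i - y i : ℝ) : UnitAddCircle) = 0)
    exact ⟨k, by simpa [sub_eq_iff_eq_add'] using hk.symm⟩
  choose k hk using hint
  rw [show x = y + fun i => (k i : ℝ) from funext hk, hF]

theorem setIntegral_unitCell_add {E : Type*} [NormedAddCommGroup E] [NormedSpace ℝ E]
    {F : (Fin n → ℝ) → E} (hF : IsPeriodic F) (v : Fin n → ℝ) :
    ∫ x in unitCell n, F (x + v) = ∫ x in unitCell n, F x := by
  obtain ⟨f, hf⟩ : ∃ f : UnitAddTorus (Fin n) → E, ∀ x : Fin n → ℝ, f (fun i => x i) = F x :=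
    ⟨_, hF.factorsThrough_unitAddTorus.extend_apply fun _ => 0⟩
  have hcubes := (UnitAddTorus.integral_preimage f v).symm.trans
    (UnitAddTorus.integral_preimage f 0)
  simpa only [hf, ← setIntegral_unitCell_comp_add, add_zero] using hcubes

end IsPeriodic

theorem hasDerivAt_setIntegral_unitCell_comp_add_smul_mul {n : ℕ} {F g : (Fin n → ℝ) → ℝ}
    (hF : ContDiff ℝ 1 F) (hg : Continuous g) (c : Fin n → ℝ) :
    HasDerivAt (fun t : ℝ => ∫ x in unitCell n, F (x + t • c) * g x)
      (∫ x in unitCell n, fderiv ℝ F x c * g x) 0 := by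
  simp only [volume_restrict_unitCell]
  exact hasDerivAt_setIntegral_comp_add_smul_mul isCompact_Icc hF hg c

-- Differentiating `∫ u (x + t a) v x = ∫ u x v (x - t a)` at `t = 0` avoids boundary terms.
theorem integral_fderiv_mul_eq_neg {n : ℕ} {u v : (Fin n → ℝ) → ℝ} (hu : ContDiff ℝ 1 u)
    (hv : ContDiff ℝ 1 v) (hpu : IsPeriodic u) (hpv : IsPeriodic v) (a : Fin n → ℝ) :
    ∫ x in unitCell n, fderiv ℝ u x a * v x = -∫ x in unitCell n, fderiv ℝ v x a * u x := by
  have hleft := hasDerivAt_setIntegral_unitCell_comp_add_smul_mul hu hv.continuous a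
  have hright := hasDerivAt_setIntegral_unitCell_comp_add_smul_mul hv hu.continuous (-a)
  have htranslate (t : ℝ) :
      ∫ x in unitCell n, v (x + t • -a) * u x = ∫ x in unitCell n, u (x + t • a) * v x := by
    rw [← ((hpv.comp_add (t • -a)).mul hpu).setIntegral_unitCell_add (t • a)]
    simp only [smul_neg, add_neg_cancel_right, mul_comm]
  simpa only [map_neg, neg_mul, integral_neg] using
    hleft.unique (hright.congr_of_eventuallyEq (.of_forall fun t => (htranslate t).symm))

-- Two integrations by parts would need second derivatives of `u` or `v`; here the second one is
-- replaced by differentiating the first one along translates.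
theorem integral_fderiv_mul_fderiv_comm {n : ℕ} {u v : (Fin n → ℝ) → ℝ} (hu : ContDiff ℝ 1 u)
    (hv : ContDiff ℝ 1 v) (hpu : IsPeriodic u) (hpv : IsPeriodic v) (a c : Fin n → ℝ) :
    ∫ x in unitCell n, fderiv ℝ u x a * fderiv ℝ v x c
      = ∫ x in unitCell n, fderiv ℝ u x c * fderiv ℝ v x a := by
  have hu' : Continuous fun x => fderiv ℝ u x a :=
    (hu.continuous_fderiv one_ne_zero).clm_apply continuous_const
  have hv' : Continuous fun x => fderiv ℝ v x a :=
    (hv.continuous_fderiv one_ne_zero).clm_apply continuous_const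
  have hleft := hasDerivAt_setIntegral_unitCell_comp_add_smul_mul hv hu' c
  have hright := hasDerivAt_setIntegral_unitCell_comp_add_smul_mul hu hv' (-c)
  have htranslate (t : ℝ) : ContDiff ℝ 1 fun x => v (x + t • c) :=
    hv.comp (contDiff_id.add contDiff_const)
  have hparts (t : ℝ) : ∫ x in unitCell n, v (x + t • c) * fderiv ℝ u x a
      = -∫ x in unitCell n, u (x + t • -c) * fderiv ℝ v x a :=
    calc ∫ x in unitCell n, v (x + t • c) * fderiv ℝ u x a
        = ∫ x in unitCell n, fderiv ℝ u x a * v (x + t • c) := by simp only [mul_comm]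
      _ = -∫ x in unitCell n, fderiv ℝ v (x + t • c) a * u x := by
          rw [integral_fderiv_mul_eq_neg hu (htranslate t) hpu (hpv.comp_add (t • c))]
          simp only [fderiv_comp_add_right]
      _ = -∫ x in unitCell n, u (x + t • -c) * fderiv ℝ v x a := by
          rw [← (((hpv.fderiv.comp (· a)).comp_add (t • c)).mul hpu).setIntegral_unitCell_add
            (t • -c)]
          simp only [smul_neg, neg_add_cancel_right, mul_comm]
  have hderiv := hleft.unique (hright.neg.congr_of_eventuallyEq (.of_forall hparts))
  simp only [map_neg, neg_mul, integral_neg, neg_neg] at hderiv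
  simpa only [mul_comm] using hderiv

theorem IsPeriodic.integral_intervalIntegral_comp_add_smul {n : ℕ} {E : Type*}
    [NormedAddCommGroup E] [NormedSpace ℝ E] [CompleteSpace E] {F : (Fin n → ℝ) → E}
    (hF : IsPeriodic F) (hc : Continuous F) (v : Fin n → ℝ) (a b : ℝ) :
    ∫ x in unitCell n, ∫ s in a..b, F (x + s • v) = (b - a) • ∫ x in unitCell n, F x := by
  have hint : Integrable (Function.uncurry fun (s : ℝ) (x : Fin n → ℝ) => F (x + s • v))
      ((volume.restrict (Set.uIoc a b)).prod (volume.restrict (unitCell n))) := by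
    rw [volume_restrict_unitCell, Measure.prod_restrict]
    refine (ContinuousOn.integrableOn_compact (isCompact_uIcc.prod isCompact_Icc)
      (Continuous.continuousOn ?_)).mono_set (Set.prod_mono Set.uIoc_subset_uIcc subset_rfl)
    unfold Function.uncurry
    fun_prop
  rw [← intervalIntegral_integral_swap hint]
  simp only [hF.setIntegral_unitCell_add, intervalIntegral.integral_const]

theorem contDiff_pd {n : ℕ} {F : (Fin n → ℝ) → ℝ} {k : WithTop ℕ∞}
    (hF : ContDiff ℝ (k + 1) F) (i : Fin n) : ContDiff ℝ k (pd F i) :=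
  (hF.fderiv_right le_rfl).clm_apply contDiff_const

theorem continuous_pd_pd {n : ℕ} {φ : (Fin n → ℝ) → ℝ} (hφ : ContDiff ℝ 2 φ) (i j : Fin n) :
    Continuous (pd (pd φ i) j) :=
  (contDiff_pd (k := 0) (contDiff_pd (k := 1) hφ i) j).continuous

theorem pd_pd_comm {n : ℕ} {φ : (Fin n → ℝ) → ℝ} {x : Fin n → ℝ}
    (hφ : ContDiffAt ℝ 2 φ x) (i j : Fin n) : pd (pd φ i) j x = pd (pd φ j) i x := by
  have hd : DifferentiableAt ℝ (fderiv ℝ φ) x :=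
    (hφ.fderiv_right (m := 1) (by norm_num)).differentiableAt one_ne_zero
  have hsnd (k l : Fin n) : pd (pd φ k) l x
      = fderiv ℝ (fderiv ℝ φ) x (Pi.single l 1) (Pi.single k 1) := by
    unfold pd
    rw [fderiv_clm_apply hd (differentiableAt_const _)]
    simp
  rw [hsnd, hsnd]
  exact hφ.isSymmSndFDerivAt (by simp) _ _

theorem hasDerivAt_comp_add_smul_single {n : ℕ} {F : (Fin n → ℝ) → ℝ} (hF : Differentiable ℝ F)
    (x : Fin n → ℝ) (i : Fin n) (s : ℝ) :
    HasDerivAt (fun s : ℝ => F (x + s • Pi.single i 1)) (pd F i (x + s • Pi.single i 1)) s :=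
  hasDerivAt_comp_add_smul hF x (Pi.single i 1) s

theorem intervalIntegral_pd_eq_zero {n : ℕ} {F : (Fin n → ℝ) → ℝ} (hF : ContDiff ℝ 1 F)
    (hp : IsPeriodic F) (x : Fin n → ℝ) (i : Fin n) :
    ∫ s in (0 : ℝ)..1, pd F i (x + s • Pi.single i 1) = 0 := by
  have hcont : Continuous (pd F i) := (contDiff_pd (k := 0) hF i).continuous
  rw [intervalIntegral.integral_eq_sub_of_hasDerivAt
    (fun s _ => hasDerivAt_comp_add_smul_single (hF.differentiable one_ne_zero) x i s)
    (Continuous.intervalIntegrable (by fun_prop) _ _)]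
  simp [hp.add_single]

theorem twelve_mul_integral_sq_le {n : ℕ} {F : (Fin n → ℝ) → ℝ} (hF : ContDiff ℝ 1 F)
    (hp : IsPeriodic F) (i : Fin n)
    (hmean : ∀ x, ∫ s in (0 : ℝ)..1, F (x + s • Pi.single i 1) = 0) :
    12 * ∫ x in unitCell n, F x ^ 2 ≤ ∫ x in unitCell n, pd F i x ^ 2 := by
  have hcont := hF.continuous
  have hcont' : Continuous (pd F i) := (contDiff_pd (k := 0) hF i).continuous
  have hline (x : Fin n → ℝ) :
      12 * F x ^ 2 ≤ ∫ s in (0 : ℝ)..1, pd F i (x + s • Pi.single i 1) ^ 2 := by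
    simpa using twelve_mul_sq_le_integral_deriv_sq one_pos
      (fun s _ => hasDerivAt_comp_add_smul_single (hF.differentiable one_ne_zero) x i s)
      (Continuous.continuousOn (by fun_prop)) (by simpa using hp.add_single x i) (hmean x)
  calc 12 * ∫ x in unitCell n, F x ^ 2
      = ∫ x in unitCell n, 12 * F x ^ 2 := (integral_const_mul _ _).symm
    _ ≤ ∫ x in unitCell n, ∫ s in (0 : ℝ)..1, pd F i (x + s • Pi.single i 1) ^ 2 :=
        integral_mono (integrableOn_unitCell (by fun_prop))
          (integrableOn_unitCell <|
            intervalIntegral.continuous_parametric_intervalIntegral_of_continuous'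
              (by fun_prop) _ _) hline
    _ = ∫ x in unitCell n, pd F i x ^ 2 := by
        rw [((hp.pd i).comp (· ^ 2)).integral_intervalIntegral_comp_add_smul (by fun_prop),
          sub_zero, one_smul]

theorem integrableOn_frobSq_hess {n : ℕ} {φ : (Fin n → ℝ) → ℝ} (hφ : ContDiff ℝ 2 φ) :
    IntegrableOn (fun x => frobSq (hess φ x)) (unitCell n) :=
  integrableOn_unitCell <| continuous_finsetSum _ fun i _ => continuous_finsetSum _ fun j _ =>
    (continuous_pd_pd hφ j i).pow 2

theorem integrableOn_euclSq_grad {n : ℕ} {φ : (Fin n → ℝ) → ℝ} (hφ : ContDiff ℝ 1 φ) :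
    IntegrableOn (fun x => euclSq (grad φ x)) (unitCell n) :=
  integrableOn_unitCell <| continuous_finsetSum _ fun i _ =>
    (contDiff_pd (k := 0) hφ i).continuous.pow 2

theorem integral_frobSq_hess {n : ℕ} {φ : (Fin n → ℝ) → ℝ} (hφ : ContDiff ℝ 2 φ)
    (hp : IsPeriodic φ) :
    ∫ x in unitCell n, frobSq (hess φ x) = ∫ x in unitCell n, lap φ x ^ 2 := by
  have hint (i j k l : Fin n) :
      Integrable (fun x => pd (pd φ i) j x * pd (pd φ k) l x) (volume.restrict (unitCell n)) :=
    integrableOn_unitCell ((continuous_pd_pd hφ i j).mul (continuous_pd_pd hφ k l))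
  have hswap (i j : Fin n) : ∫ x in unitCell n, pd (pd φ j) i x * pd (pd φ i) j x
      = ∫ x in unitCell n, pd (pd φ i) i x * pd (pd φ j) j x := by
    refine (integral_fderiv_mul_fderiv_comm (contDiff_pd (k := 1) hφ j)
      (contDiff_pd (k := 1) hφ i) (hp.pd j) (hp.pd i) _ _).trans ?_
    simp only [pd, mul_comm]
  calc ∫ x in unitCell n, frobSq (hess φ x)
      = ∫ x in unitCell n, ∑ i, ∑ j, pd (pd φ j) i x * pd (pd φ i) j x := by
        simp only [frobSq, hess, Matrix.of_apply, sq, pd_pd_comm hφ.contDiffAt]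
    _ = ∑ i, ∑ j, ∫ x in unitCell n, pd (pd φ j) i x * pd (pd φ i) j x := by
        simp only [integral_finsetSum, hint, integrable_finsetSum, implies_true]
    _ = ∑ i, ∑ j, ∫ x in unitCell n, pd (pd φ i) i x * pd (pd φ j) j x := by
        simp only [hswap]
    _ = ∫ x in unitCell n, ∑ i, ∑ j, pd (pd φ i) i x * pd (pd φ j) j x := by
        simp only [integral_finsetSum, hint, integrable_finsetSum, implies_true]
    _ = ∫ x in unitCell n, lap φ x ^ 2 := by
        simp only [lap, sq, Finset.sum_mul_sum]

theorem twelve_mul_integral_euclSq_grad_le {n : ℕ} {φ : (Fin n → ℝ) → ℝ} (hφ : ContDiff ℝ 2 φ)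
    (hp : IsPeriodic φ) :
    12 * ∫ x in unitCell n, euclSq (grad φ x) ≤ ∫ x in unitCell n, frobSq (hess φ x) := by
  have hgrad (i : Fin n) : ContDiff ℝ 1 (pd φ i) := contDiff_pd hφ i
  have hint (i : Fin n) : IntegrableOn (fun x => pd φ i x ^ 2) (unitCell n) :=
    integrableOn_unitCell ((hgrad i).continuous.pow 2)
  have hhess (i j : Fin n) := continuous_pd_pd hφ i j
  calc 12 * ∫ x in unitCell n, euclSq (grad φ x)
      = ∑ i, 12 * ∫ x in unitCell n, pd φ i x ^ 2 := by
        rw [← Finset.mul_sum, ← integral_finsetSum _ fun i _ => hint i]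
        rfl
    _ ≤ ∑ i, ∫ x in unitCell n, pd (pd φ i) i x ^ 2 :=
        Finset.sum_le_sum fun i _ => twelve_mul_integral_sq_le (hgrad i) (hp.pd i) i fun x =>
          intervalIntegral_pd_eq_zero (hφ.of_le one_le_two) hp x i
    _ = ∫ x in unitCell n, ∑ i, hess φ x i i ^ 2 :=
        (integral_finsetSum _ fun i _ => integrableOn_unitCell ((hhess i i).pow 2)).symm
    _ ≤ ∫ x in unitCell n, frobSq (hess φ x) :=
        integral_mono
          (integrableOn_unitCell (continuous_finsetSum _ fun i _ => (hhess i i).pow 2))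
          (integrableOn_frobSq_hess hφ) fun x =>
            Finset.sum_le_sum fun i _ => Finset.single_le_sum
              (f := fun j => hess φ x i j ^ 2) (fun j _ => sq_nonneg _) (Finset.mem_univ i)

theorem integral_frobSq_hess_add_euclSq_grad_le {n : ℕ} {φ : (Fin n → ℝ) → ℝ}
    (hφ : ContDiff ℝ 2 φ) (hp : IsPeriodic φ) :
    ∫ x in unitCell n, (frobSq (hess φ x) + euclSq (grad φ x))
      ≤ 13 / 12 * ∫ x in unitCell n, lap φ x ^ 2 := by
  have hgrad := twelve_mul_integral_euclSq_grad_le hφ hp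
  rw [integral_add (integrableOn_frobSq_hess hφ)
    (integrableOn_euclSq_grad (hφ.of_le one_le_two)), ← integral_frobSq_hess hφ hp]
  linarith

theorem frobSq_nonneg {n : ℕ} (M : Matrix (Fin n) (Fin n) ℝ) : 0 ≤ frobSq M :=
  Finset.sum_nonneg fun _ _ => Finset.sum_nonneg fun _ _ => sq_nonneg _

theorem euclSq_nonneg {n : ℕ} (v : Fin n → ℝ) : 0 ≤ euclSq v :=
  Finset.sum_nonneg fun _ _ => sq_nonneg _

theorem frobSq_pos_of_trace_ne_zero {n : ℕ} {M : Matrix (Fin n) (Fin n) ℝ} (hM : M.trace ≠ 0) :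
    0 < frobSq M := by
  obtain ⟨i, -, hi⟩ := Finset.exists_ne_zero_of_sum_ne_zero hM
  calc 0 < M i i ^ 2 := by positivity
    _ ≤ ∑ j, M i j ^ 2 :=
        Finset.single_le_sum (f := fun j => M i j ^ 2) (fun _ _ => sq_nonneg _)
          (Finset.mem_univ i)
    _ ≤ frobSq M :=
        Finset.single_le_sum (f := fun i => ∑ j, M i j ^ 2)
          (fun _ _ => Finset.sum_nonneg fun _ _ => sq_nonneg _) (Finset.mem_univ i)

theorem sq_frobInner_add_dotc_le {n : ℕ} (M N : Matrix (Fin n) (Fin n) ℝ) (v w : Fin n → ℝ) :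
    (frobInner M N + dotc v w) ^ 2 ≤ (frobSq M + euclSq v) * (frobSq N + euclSq w) := by
  have h := Finset.sum_mul_sq_le_sq_mul_sq Finset.univ
    (Sum.elim (fun p : Fin n × Fin n => M p.1 p.2) v) (Sum.elim (fun p => N p.1 p.2) w)
  simpa [Fintype.sum_sum_type, Fintype.sum_prod_type, frobInner, frobSq, dotc, euclSq] using h

theorem frobInner_sub_one {n : ℕ} (M N : Matrix (Fin n) (Fin n) ℝ) :
    frobInner (M - 1) N = frobInner M N - N.trace := by
  simp [frobInner, sub_mul, Finset.sum_sub_distrib, Matrix.one_apply, Matrix.trace]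

theorem sq_frobInner_add_dotc_sub_lap_le {n : ℕ} {M : Matrix (Fin n) (Fin n) ℝ} {v : Fin n → ℝ}
    {ε : ℝ} (hε : frobSq (M - 1) + euclSq v ≤ ε) (φ : (Fin n → ℝ) → ℝ) (x : Fin n → ℝ) :
    (frobInner M (hess φ x) + dotc v (grad φ x) - lap φ x) ^ 2
      ≤ ε * (frobSq (hess φ x) + euclSq (grad φ x)) := by
  have htrace : lap φ x = (hess φ x).trace := rfl
  rw [htrace, add_sub_right_comm, ← frobInner_sub_one]
  exact (sq_frobInner_add_dotc_le _ _ _ _).trans (mul_le_mul_of_nonneg_right hε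
    (add_nonneg (frobSq_nonneg _) (euclSq_nonneg _)))

theorem frobSq_smul_sub_one {n : ℕ} (g : ℝ) (M : Matrix (Fin n) (Fin n) ℝ) :
    frobSq (g • M - 1) = g ^ 2 * frobSq M - 2 * g * M.trace + n := by
  have hentry (i j : Fin n) : (g * M i j - (1 : Matrix (Fin n) (Fin n) ℝ) i j) ^ 2
      = g ^ 2 * M i j ^ 2 - 2 * g * (if i = j then M i j else 0) + if i = j then 1 else 0 := by
    rw [Matrix.one_apply]
    split_ifs <;> ring
  simp [frobSq, hentry, Finset.sum_add_distrib, ← Finset.mul_sum, Matrix.trace]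

theorem euclSq_smul {n : ℕ} (g : ℝ) (v : Fin n → ℝ) : euclSq (g • v) = g ^ 2 * euclSq v := by
  simp only [euclSq, Pi.smul_apply, smul_eq_mul, mul_pow, Finset.mul_sum]

theorem frobSq_gam_smul_sub_one_add_euclSq_le {n : ℕ}
    {A : (Fin n → ℝ) → Matrix (Fin n) (Fin n) ℝ} {b : (Fin n → ℝ) → Fin n → ℝ} {δ : ℝ}
    {x : Fin n → ℝ} (htr : (A x).trace ≠ 0)
    (hcordes : (frobSq (A x) + euclSq (b x)) / (A x).trace ^ 2 ≤ 1 / ((n : ℝ) - 1 + δ)) :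
    frobSq (gam A b x • A x - 1) + euclSq (gam A b x • b x) ≤ 1 - δ := by
  have hS : 0 < frobSq (A x) + euclSq (b x) :=
    add_pos_of_pos_of_nonneg (frobSq_pos_of_trace_ne_zero htr) (euclSq_nonneg _)
  have hvalue : frobSq (gam A b x • A x - 1) + euclSq (gam A b x • b x)
      = n - (A x).trace ^ 2 / (frobSq (A x) + euclSq (b x)) := by
    rw [frobSq_smul_sub_one, euclSq_smul, gam]
    field_simp
    ring
  have hratio : (n : ℝ) - 1 + δ ≤ (A x).trace ^ 2 / (frobSq (A x) + euclSq (b x)) := by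
    rw [one_div] at hcordes
    simpa only [inv_div, inv_inv] using inv_anti₀ (by positivity) hcordes
  linarith

theorem integrableOn_sq_frobInner_add_dotc_sub_lap {n : ℕ}
    {M : (Fin n → ℝ) → Matrix (Fin n) (Fin n) ℝ} {v : (Fin n → ℝ) → Fin n → ℝ} {ε : ℝ}
    (hM : ∀ i j, Measurable fun x => M x i j) (hv : ∀ i, Measurable fun x => v x i)
    (hε : ∀ᵐ x ∂volume.restrict (unitCell n), frobSq (M x - 1) + euclSq (v x) ≤ ε)
    {φ : (Fin n → ℝ) → ℝ} (hφ : ContDiff ℝ 2 φ) :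
    IntegrableOn
      (fun x => (frobInner (M x) (hess φ x) + dotc (v x) (grad φ x) - lap φ x) ^ 2)
      (unitCell n) := by
  have hhess (i j : Fin n) : Measurable (pd (pd φ i) j) := (continuous_pd_pd hφ i j).measurable
  have hgrad (i : Fin n) : Measurable (pd φ i) := (contDiff_pd (k := 1) hφ i).continuous.measurable
  refine Integrable.mono' (((integrableOn_frobSq_hess hφ).add
    (integrableOn_euclSq_grad (hφ.of_le one_le_two))).const_mul ε) ?_ ?_
  · refine Measurable.aestronglyMeasurable ?_
    simp only [frobInner, dotc, lap, hess, grad, Matrix.of_apply]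
    fun_prop
  · filter_upwards [hε] with x hx
    rw [Real.norm_of_nonneg (sq_nonneg _)]
    exact sq_frobInner_add_dotc_sub_lap_le hx φ x

theorem integral_sq_frobInner_add_dotc_sub_lap_le {n : ℕ}
    {M : (Fin n → ℝ) → Matrix (Fin n) (Fin n) ℝ} {v : (Fin n → ℝ) → Fin n → ℝ} {ε : ℝ}
    (hε₀ : 0 ≤ ε) (hε : ∀ᵐ x ∂volume.restrict (unitCell n), frobSq (M x - 1) + euclSq (v x) ≤ ε)
    {φ : (Fin n → ℝ) → ℝ} (hφ : ContDiff ℝ 2 φ) (hp : IsPeriodic φ) :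
    ∫ x in unitCell n, (frobInner (M x) (hess φ x) + dotc (v x) (grad φ x) - lap φ x) ^ 2
      ≤ ε * (13 / 12 * ∫ x in unitCell n, lap φ x ^ 2) :=
  calc _ ≤ ∫ x in unitCell n, ε * (frobSq (hess φ x) + euclSq (grad φ x)) := by
        refine integral_mono_of_nonneg (.of_forall fun x => sq_nonneg _)
          (((integrableOn_frobSq_hess hφ).add
            (integrableOn_euclSq_grad (hφ.of_le one_le_two))).const_mul ε) ?_
        filter_upwards [hε] with x hx using sq_frobInner_add_dotc_sub_lap_le hx φ x
    _ = ε * ∫ x in unitCell n, (frobSq (hess φ x) + euclSq (grad φ x)) := integral_const_mul _ _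
    _ ≤ _ := mul_le_mul_of_nonneg_left (integral_frobSq_hess_add_euclSq_grad_le hφ hp) hε₀

theorem one_sub_kappa (n : ℕ) (δ : ℝ) : 1 - kappa n δ = (1 - δ) * (1 + n / Real.pi ^ 2) := by
  have := Real.pi_pos
  have : (n : ℝ) + Real.pi ^ 2 ≠ 0 := by positivity
  rw [kappa]
  field_simp
  ring

theorem one_sub_mul_le_one_sub_kappa {n : ℕ} (hn : 1 ≤ n) {δ : ℝ} (hδ : δ ≤ 1) :
    (1 - δ) * (13 / 12) ≤ 1 - kappa n δ := by
  have hn' : (1 : ℝ) ≤ n := by exact_mod_cast hn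
  have hpi : 1 / 12 ≤ (n : ℝ) / Real.pi ^ 2 := by
    rw [div_le_div_iff₀ (by norm_num) (by positivity)]
    nlinarith [Real.pi_lt_d2, Real.pi_pos]
  rw [one_sub_kappa]
  exact mul_le_mul_of_nonneg_left (by linarith) (sub_nonneg.2 hδ)

theorem measurable_gam {n : ℕ} {A : (Fin n → ℝ) → Matrix (Fin n) (Fin n) ℝ}
    {b : (Fin n → ℝ) → Fin n → ℝ} (hA : ∀ i j, Measurable fun x => A x i j)
    (hb : ∀ i, Measurable fun x => b x i) : Measurable (gam A b) := by
  unfold gam frobSq euclSq Matrix.trace Matrix.diag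
  fun_prop

theorem SettingB.trace_pos {n : ℕ} (hn : 1 ≤ n) {A : (Fin n → ℝ) → Matrix (Fin n) (Fin n) ℝ}
    {b : (Fin n → ℝ) → Fin n → ℝ} {lam Lam δ : ℝ} (hAB : SettingB A b lam Lam δ) :
    ∀ᵐ x : Fin n → ℝ, 0 < (A x).trace := by
  have : Nonempty (Fin n) := ⟨⟨0, hn⟩⟩
  filter_upwards [hAB.ellip] with x hell
  have hdiag (i : Fin n) : lam ≤ A x i i := by
    simpa [euclSq, dotc, Pi.single_apply] using (hell (Pi.single i 1)).1
  exact Finset.sum_pos (fun i _ => hAB.lam_pos.trans_le (hdiag i)) Finset.univ_nonempty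

theorem neBot_ae_restrict_unitCell (n : ℕ) : (ae (volume.restrict (unitCell n))).NeBot := by
  refine ae_restrict_neBot.2 ?_
  simp [unitCell, Real.volume_pi_Ioo]

theorem stmt_6_general {n : ℕ} {A : (Fin n → ℝ) → Matrix (Fin n) (Fin n) ℝ}
    {b : (Fin n → ℝ) → Fin n → ℝ} {δ : ℝ}
    (hA : ∀ i j, Measurable fun x => A x i j) (hb : ∀ i, Measurable fun x => b x i)
    (htr : ∀ᵐ x ∂volume.restrict (unitCell n), (A x).trace ≠ 0)
    (hcordes : ∀ᵐ x ∂volume.restrict (unitCell n),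
      (frobSq (A x) + euclSq (b x)) / (A x).trace ^ 2 ≤ 1 / ((n : ℝ) - 1 + δ))
    {φ : (Fin n → ℝ) → ℝ} (hφ : ContDiff ℝ 2 φ) (hp : IsPeriodic φ) :
    IntegrableOn (fun x => (frobInner (gam A b x • A x) (hess φ x)
        + dotc (gam A b x • b x) (grad φ x) - lap φ x) ^ 2) (unitCell n) ∧
      ∫ x in unitCell n, (frobInner (gam A b x • A x) (hess φ x)
        + dotc (gam A b x • b x) (grad φ x) - lap φ x) ^ 2
      ≤ (1 - kappa n δ) * ∫ x in unitCell n, lap φ x ^ 2 := by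
  have hgam := measurable_gam hA hb
  have hbound : ∀ᵐ x ∂volume.restrict (unitCell n),
      frobSq (gam A b x • A x - 1) + euclSq (gam A b x • b x) ≤ 1 - δ := by
    filter_upwards [htr, hcordes] with x using frobSq_gam_smul_sub_one_add_euclSq_le
  have := neBot_ae_restrict_unitCell n
  obtain ⟨x, hx, htrx⟩ := (hbound.and htr).exists
  have hδ : 0 ≤ 1 - δ := (add_nonneg (frobSq_nonneg _) (euclSq_nonneg _)).trans hx
  have hn : 1 ≤ n := Nat.one_le_iff_ne_zero.2 fun h => htrx (by subst h; simp)
  refine ⟨integrableOn_sq_frobInner_add_dotc_sub_lap (fun i j => hgam.mul (hA i j))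
    (fun i => hgam.mul (hb i)) hbound hφ, ?_⟩
  refine (integral_sq_frobInner_add_dotc_sub_lap_le hδ hbound hφ hp).trans ?_
  rw [← mul_assoc]
  exact mul_le_mul_of_nonneg_right (one_sub_mul_le_one_sub_kappa hn (sub_nonneg.1 hδ))
    (integral_nonneg fun x => sq_nonneg _)

/-- In Setting B, for every `C²` periodic function `φ` there holds
`∫_Y |Ã:D²φ + b̃·∇φ − Δφ|² ≤ (1−κ) ∫_Y (Δφ)²`. -/
theorem stmt_6 {n : ℕ} (hn : 1 ≤ n)
    (A : (Fin n → ℝ) → Matrix (Fin n) (Fin n) ℝ) (b : (Fin n → ℝ) → Fin n → ℝ)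
    (lam Lam δ : ℝ) (hAB : SettingB A b lam Lam δ) :
    ∀ φ : (Fin n → ℝ) → ℝ, ContDiff ℝ 2 φ → IsPeriodic φ →
      (∫ x in unitCell n,
        (frobInner (gam A b x • A x) (hess φ x) + dotc (gam A b x • b x) (grad φ x)
          - lap φ x) ^ 2)
        ≤ (1 - kappa n δ) * ∫ x in unitCell n, (lap φ x) ^ 2 :=
  fun _ hφ hp => (stmt_6_general hAB.measA hAB.measb
    (ae_restrict_of_ae ((hAB.trace_pos hn).mono fun _ => ne_of_gt)) (ae_restrict_of_ae hAB.cordes)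
    hφ hp).2
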